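/- arXiv:1907.05362 — 5 statements merged into one kernel-verified Lean document; each statement's English description precedes it below -/
import Mathlib

section
/- For all continuous maps F, G, H : ℝ → Matrix n n ℂ, the operation ▷ satisfies the pre-Lie relation F ▷ (G ▷ H) − (F ▷ G) ▷ H = G ▷ (F ▷ H) − (G ▷ F) ▷ H (as equality of maps ℝ → Matrix n n ℂ). -/
attribute [local instance] Matrix.normedAddCommGroup Matrix.normedSpace

/-- The binary operation `(P ▷ Q)(t) = ∫₀ᵗ [P(u), Q(t)] du` on maps
`ℝ → Matrix n n ℂ`, where `[X,Y] = XY − YX`. -/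
noncomputable def rhd {n : ℕ} (P Q : ℝ → Matrix (Fin n) (Fin n) ℂ) :
    ℝ → Matrix (Fin n) (Fin n) ℂ :=
  fun t => ∫ u in (0:ℝ)..t, (P u * Q t - Q t * P u)

/-!
Put `f t = ∫₀ᵗ F` and `g t = ∫₀ᵗ G`. The bracket is continuous and linear in its first argument, so
`(F ▷ H)(t) = ⁅f t, H t⁆`. The product rule gives `⁅f, g⁆' = ⁅f, G⁆ + ⁅F, g⁆ = F ▷ G - G ▷ F`, so
the primitive of `F ▷ G - G ▷ F` vanishing at `0` is `⁅f, g⁆`, and the pre-Lie relation at time `t`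
is the Jacobi identity `⁅⁅f, g⁆, H⁆ = ⁅f, ⁅g, H⁆⁆ - ⁅g, ⁅f, H⁆⁆`.
-/

section BilinRhd

open MeasureTheory

variable {E F W : Type*} [NormedAddCommGroup E] [NormedSpace ℝ E] [NormedAddCommGroup F]
  [NormedSpace ℝ F] [NormedAddCommGroup W] [NormedSpace ℝ W]

/-- The operation `▷` with the commutator replaced by a continuous bilinear map `B`. -/
noncomputable def bilinRhd (B : E →L[ℝ] F →L[ℝ] W) (P : ℝ → E) (Q : ℝ → F) : ℝ → W :=
  fun t => ∫ u in (0 : ℝ)..t, B (P u) (Q t)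

variable [CompleteSpace E] [CompleteSpace W] (B : E →L[ℝ] F →L[ℝ] W) {P : ℝ → E} {Q : ℝ → F}

theorem bilinRhd_eq (hP : ∀ t, IntervalIntegrable P volume 0 t) (Q : ℝ → F) :
    bilinRhd B P Q = fun t => B (∫ u in (0 : ℝ)..t, P u) (Q t) :=
  funext fun t => (B.flip (Q t)).intervalIntegral_comp_comm (hP t)

theorem continuous_bilinRhd (hP : ∀ a b, IntervalIntegrable P volume a b) (hQ : Continuous Q) :
    Continuous (bilinRhd B P Q) := by
  rw [bilinRhd_eq B (hP 0)]
  exact B.continuous₂.comp₂ (intervalIntegral.continuous_primitive hP 0) hQ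

theorem integral_bilinRhd_add_integral_bilinRhd_flip [CompleteSpace F] (hP : Continuous P)
    (hQ : Continuous Q) (t : ℝ) :
    (∫ u in (0 : ℝ)..t, bilinRhd B P Q u) + (∫ u in (0 : ℝ)..t, bilinRhd B.flip Q P u) =
      B (∫ u in (0 : ℝ)..t, P u) (∫ u in (0 : ℝ)..t, Q u) := by
  have hPQ := continuous_bilinRhd B hP.intervalIntegrable hQ
  have hQP := continuous_bilinRhd B.flip hQ.intervalIntegrable hP
  have product_rule (s : ℝ) :
      HasDerivAt (fun s => B (∫ u in (0 : ℝ)..s, P u) (∫ u in (0 : ℝ)..s, Q u))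
        (bilinRhd B P Q s + bilinRhd B.flip Q P s) s := by
    rw [bilinRhd_eq B (hP.intervalIntegrable 0), bilinRhd_eq B.flip (hQ.intervalIntegrable 0)]
    exact B.hasDerivAt_of_bilinear (fun _ => (hP.integral_hasStrictDerivAt 0 s).hasDerivAt)
      (fun _ => (hQ.integral_hasStrictDerivAt 0 s).hasDerivAt)
  rw [← intervalIntegral.integral_add (hPQ.intervalIntegrable 0 t) (hQP.intervalIntegrable 0 t),
    intervalIntegral.integral_eq_sub_of_hasDerivAt (fun s _ => product_rule s)
      ((hPQ.add hQP).intervalIntegrable 0 t)]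
  simp

end BilinRhd

section LieBracket

variable {L : Type*} [NormedAddCommGroup L] [NormedSpace ℝ L] [CompleteSpace L]
  {B : L →L[ℝ] L →L[ℝ] L} {F G : ℝ → L}

theorem integral_bilinRhd_sub_integral_bilinRhd_swap (skew : ∀ x y, B x y = -B y x)
    (hF : Continuous F) (hG : Continuous G) (t : ℝ) :
    (∫ u in (0 : ℝ)..t, bilinRhd B F G u) - (∫ u in (0 : ℝ)..t, bilinRhd B G F u) =
      B (∫ u in (0 : ℝ)..t, F u) (∫ u in (0 : ℝ)..t, G u) := by
  have flip_eq_neg : bilinRhd B.flip G F = fun u => -bilinRhd B G F u := by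
    funext u
    simp only [bilinRhd, ← intervalIntegral.integral_neg, ContinuousLinearMap.flip_apply, ← skew]
  rw [← integral_bilinRhd_add_integral_bilinRhd_flip B hF hG t, flip_eq_neg,
    intervalIntegral.integral_neg, sub_eq_add_neg]

-- `[LieRing L] [NormedAddCommGroup L]` would put two unrelated additions on `L`, so the bracket is
-- the map `B` and its Lie algebra laws are hypotheses.
theorem rhd_preLie_general (skew : ∀ x y, B x y = -B y x)
    (jacobi : ∀ x y z, B (B x y) z = B x (B y z) - B y (B x z))
    (hF : Continuous F) (hG : Continuous G) (H : ℝ → L) :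
    bilinRhd B F (bilinRhd B G H) - bilinRhd B (bilinRhd B F G) H =
      bilinRhd B G (bilinRhd B F H) - bilinRhd B (bilinRhd B G F) H := by
  rw [sub_eq_sub_iff_sub_eq_sub]
  have hFG := continuous_bilinRhd B hF.intervalIntegrable hG
  have hGF := continuous_bilinRhd B hG.intervalIntegrable hF
  funext t
  set f := ∫ u in (0 : ℝ)..t, F u
  set g := ∫ u in (0 : ℝ)..t, G u
  calc
    (bilinRhd B F (bilinRhd B G H) - bilinRhd B G (bilinRhd B F H)) t
      = B f (B g (H t)) - B g (B f (H t)) := by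
        simp only [Pi.sub_apply, bilinRhd_eq B (hF.intervalIntegrable 0),
          bilinRhd_eq B (hG.intervalIntegrable 0), f, g]
    _ = B (B f g) (H t) := (jacobi f g (H t)).symm
    _ = B ((∫ u in (0 : ℝ)..t, bilinRhd B F G u) - ∫ u in (0 : ℝ)..t, bilinRhd B G F u) (H t) := by
        rw [integral_bilinRhd_sub_integral_bilinRhd_swap skew hF hG]
    _ = (bilinRhd B (bilinRhd B F G) H - bilinRhd B (bilinRhd B G F) H) t := by
        simp only [Pi.sub_apply, map_sub, sub_apply, bilinRhd_eq B (hFG.intervalIntegrable 0),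
          bilinRhd_eq B (hGF.intervalIntegrable 0)]

end LieBracket

section Matrix

attribute [local instance] LieRing.ofAssociativeRing

variable {ι 𝕜 : Type*} [Fintype ι] [DecidableEq ι] [RCLike 𝕜]

variable (ι 𝕜) in
/-- The matrix commutator as a continuous bilinear map. It is bundled over `ℝ`, the scalar field of
the time integrals. -/
noncomputable def commutatorCLM : Matrix ι ι 𝕜 →L[ℝ] Matrix ι ι 𝕜 →L[ℝ] Matrix ι ι 𝕜 :=
  LinearMap.toContinuousBilinearMap (LieAlgebra.ad ℝ (Matrix ι ι 𝕜)).toLinearMap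

theorem commutatorCLM_skew (X Y : Matrix ι ι 𝕜) :
    commutatorCLM ι 𝕜 X Y = -commutatorCLM ι 𝕜 Y X :=
  (lie_skew X Y).symm

theorem commutatorCLM_jacobi (X Y Z : Matrix ι ι 𝕜) :
    commutatorCLM ι 𝕜 (commutatorCLM ι 𝕜 X Y) Z =
      commutatorCLM ι 𝕜 X (commutatorCLM ι 𝕜 Y Z) - commutatorCLM ι 𝕜 Y (commutatorCLM ι 𝕜 X Z) :=
  lie_lie X Y Z

end Matrix

theorem rhd_eq_bilinRhd {n : ℕ} : @rhd n = bilinRhd (commutatorCLM (Fin n) ℂ) :=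
  rfl

/-- The operation `▷` satisfies the pre-Lie relation
`F ▷ (G ▷ H) − (F ▷ G) ▷ H = G ▷ (F ▷ H) − (G ▷ F) ▷ H`. -/
theorem rhd_preLie {n : ℕ} (F G H : ℝ → Matrix (Fin n) (Fin n) ℂ)
    (hF : Continuous F) (hG : Continuous G) (hH : Continuous H) :
    rhd F (rhd G H) - rhd (rhd F G) H = rhd G (rhd F H) - rhd (rhd G F) H := by
  simp only [rhd_eq_bilinRhd]
  exact rhd_preLie_general commutatorCLM_skew commutatorCLM_jacobi hF hG H
end

section
/- Let A : ℝ → Matrix n n ℂ be continuous. Set R₁ = A, R₂ = −(1/2) A ▷ A, R₃ = (1/4) (A ▷ A) ▷ A + (1/12) A ▷ (A ▷ A), and let R₄ : ℝ → Matrix n n ℂ be the (unique) map satisfying R₄ + (1/2)(R₁ ▷ R₃ + R₂ ▷ R₂ + R₃ ▷ R₁) + (1/6)(R₁ ▷ (R₁ ▷ R₂) + R₁ ▷ (R₂ ▷ R₁) + R₂ ▷ (R₁ ▷ R₁)) + (1/24) R₁ ▷ (R₁ ▷ (R₁ ▷ R₁)) = 0. Then R₄ = −(1/6) ((A ▷ A)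 ▷ A) ▷ A − (1/12) A ▷ ((A ▷ A) ▷ A). -/
attribute [local instance] Matrix.normedAddCommGroup Matrix.normedSpace

/-!
Write `∫F` for the primitive of `F` vanishing at `0`, so that `F ▷ G = [∫F, G]`. Integration by
parts gives `[∫F, ∫G] = ∫(F ▷ G) - ∫(G ▷ F)`, and with the Jacobi identity this makes the
associator of `▷` symmetric in its first two arguments: continuous curves form a left pre-Lie
algebra. There, the symmetry of the associator of `A`, `A ▷ A`, `A` is the only relation needed to
reduce the fourth-order Magnus recursion to two terms.
-/

theorem magnus_order_four_of_leftPreLieAlgebra {K L : Type*} [Field K] [CharZero K]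
    [LeftPreLieRing L] [LeftPreLieAlgebra K L] {a r₂ r₃ : L}
    (h₂ : r₂ = -((1 / 2 : K) • (a * a)))
    (h₃ : r₃ = (1 / 4 : K) • (a * a * a) + (1 / 12 : K) • (a * (a * a))) :
    (1 / 2 : K) • (a * r₃ + r₂ * r₂ + r₃ * a)
        + (1 / 6 : K) • (a * (a * r₂) + a * (r₂ * a) + r₂ * (a * a))
        + (1 / 24 : K) • (a * (a * (a * a)))
      = (1 / 6 : K) • (a * a * a * a) + (1 / 12 : K) • (a * (a * a * a)) := by
  have preLie : a * (a * a) * a - a * (a * a * a) = a * a * a * a - a * a * (a * a) := by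
    simpa only [associator_apply] using LeftPreLieRing.assoc_symm a (a * a) a
  subst h₂ h₃
  simp only [mul_add, add_mul, mul_neg, neg_mul, smul_mul_assoc, mul_smul_comm]
  linear_combination (norm := module) (1 / 24 : K) • preLie

section IntegrationByParts

variable {E F G : Type*} [NormedAddCommGroup E] [NormedSpace ℝ E] [CompleteSpace E]
  [NormedAddCommGroup F] [NormedSpace ℝ F] [CompleteSpace F]
  [NormedAddCommGroup G] [NormedSpace ℝ G] [CompleteSpace G]

theorem bilinear_integral_integral_eq (B : E →L[ℝ] F →L[ℝ] G) {f : ℝ → E} {g : ℝ → F}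
    (hf : Continuous f) (hg : Continuous g) (a t : ℝ) :
    B (∫ u in a..t, f u) (∫ u in a..t, g u)
      = ∫ s in a..t, (B (∫ u in a..s, f u) (g s) + B (f s) (∫ u in a..s, g u)) := by
  have hf' (s : ℝ) : HasDerivAt (fun s ↦ ∫ u in a..s, f u) (f s) s :=
    (hf.integral_hasStrictDerivAt a s).hasDerivAt
  have hg' (s : ℝ) : HasDerivAt (fun s ↦ ∫ u in a..s, g u) (g s) s :=
    (hg.integral_hasStrictDerivAt a s).hasDerivAt
  have continuous_deriv : Continuous fun s ↦
      B (∫ u in a..s, f u) (g s) + B (f s) (∫ u in a..s, g u) := by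
    have := continuous_iff_continuousAt.2 fun s ↦ (hf' s).continuousAt
    have := continuous_iff_continuousAt.2 fun s ↦ (hg' s).continuousAt
    fun_prop
  rw [intervalIntegral.integral_eq_sub_of_hasDerivAt
    (fun s _ ↦ B.hasDerivAt_of_bilinear (fun _ ↦ hf' s) (fun _ ↦ hg' s))
    (continuous_deriv.intervalIntegrable a t)]
  simp

end IntegrationByParts

/-- A continuous Lie bracket on a normed space, so that a complete `E` becomes a Banach–Lie algebra.
It is bundled, rather than given by a `LieRing` instance, because the latter would put a second
additive group structure on `E`. -/
structure ContinuousLieBracket (𝕜 E : Type*) [NontriviallyNormedField 𝕜] [NormedAddCommGroup E]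
    [NormedSpace 𝕜 E] where
  toBilin : E →L[𝕜] E →L[𝕜] E
  self_eq_zero : ∀ x, toBilin x x = 0
  leibniz : ∀ x y z, toBilin x (toBilin y z) = toBilin (toBilin x y) z + toBilin y (toBilin x z)

namespace ContinuousLieBracket

variable {𝕜 E : Type*} [RCLike 𝕜] [NormedAddCommGroup E] [NormedSpace 𝕜 E]

theorem skew (B : ContinuousLieBracket 𝕜 E) (x y : E) : -B.toBilin y x = B.toBilin x y := by
  have h := B.self_eq_zero (x + y)
  simp only [map_add, add_apply, B.self_eq_zero, zero_add, add_zero] at h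
  exact neg_eq_of_add_eq_zero_right h

variable [NormedSpace ℝ E]

/-- The operation `(P ▷ Q)(t) = ∫₀ᵗ [P(u), Q(t)] du` for an arbitrary continuous Lie bracket. -/
noncomputable def rhd (B : ContinuousLieBracket 𝕜 E) (P Q : ℝ → E) : ℝ → E :=
  fun t ↦ ∫ u in (0 : ℝ)..t, B.toBilin (P u) (Q t)

theorem rhd_apply [CompleteSpace E] (B : ContinuousLieBracket 𝕜 E) {P : ℝ → E}
    (hP : Continuous P) (Q : ℝ → E) (t : ℝ) :
    B.rhd P Q t = B.toBilin (∫ u in (0 : ℝ)..t, P u) (Q t) :=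
  (B.toBilin.flip (Q t)).intervalIntegral_comp_comm (hP.intervalIntegrable 0 t)

theorem continuous_rhd [CompleteSpace E] (B : ContinuousLieBracket 𝕜 E) {P Q : ℝ → E}
    (hP : Continuous P) (hQ : Continuous Q) : Continuous (B.rhd P Q) := by
  have := intervalIntegral.continuous_primitive (μ := MeasureTheory.volume) hP.intervalIntegrable 0
  rw [funext (B.rhd_apply hP Q)]
  fun_prop

theorem integral_rhd_sub_integral_rhd [IsScalarTower ℝ 𝕜 E] [CompleteSpace E]
    (B : ContinuousLieBracket 𝕜 E) {P Q : ℝ → E} (hP : Continuous P) (hQ : Continuous Q) (t : ℝ) :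
    (∫ u in (0 : ℝ)..t, B.rhd P Q u) - ∫ u in (0 : ℝ)..t, B.rhd Q P u
      = B.toBilin (∫ u in (0 : ℝ)..t, P u) (∫ u in (0 : ℝ)..t, Q u) :=
  calc (∫ u in (0 : ℝ)..t, B.rhd P Q u) - ∫ u in (0 : ℝ)..t, B.rhd Q P u
      = ∫ u in (0 : ℝ)..t, (B.rhd P Q u - B.rhd Q P u) :=
        (intervalIntegral.integral_sub ((B.continuous_rhd hP hQ).intervalIntegrable 0 t)
          ((B.continuous_rhd hQ hP).intervalIntegrable 0 t)).symm
    _ = ∫ s in (0 : ℝ)..t, (B.toBilin (∫ u in (0 : ℝ)..s, P u) (Q s)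
          + B.toBilin (P s) (∫ u in (0 : ℝ)..s, Q u)) := by
        simp only [B.rhd_apply hP, B.rhd_apply hQ, sub_eq_add_neg, B.skew]
    _ = B.toBilin (∫ u in (0 : ℝ)..t, P u) (∫ u in (0 : ℝ)..t, Q u) :=
        (bilinear_integral_integral_eq (B.toBilin.bilinearRestrictScalars ℝ) hP hQ 0 t).symm

theorem rhd_rhd_sub_rhd_rhd [IsScalarTower ℝ 𝕜 E] [CompleteSpace E]
    (B : ContinuousLieBracket 𝕜 E) {P Q : ℝ → E} (hP : Continuous P) (hQ : Continuous Q)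
    (S : ℝ → E) :
    B.rhd (B.rhd P Q) S - B.rhd P (B.rhd Q S) = B.rhd (B.rhd Q P) S - B.rhd Q (B.rhd P S) := by
  funext t
  rw [Pi.sub_apply, Pi.sub_apply, B.rhd_apply (B.continuous_rhd hP hQ),
    B.rhd_apply (B.continuous_rhd hQ hP), sub_eq_sub_iff_sub_eq_sub, ← sub_apply, ← map_sub,
    B.integral_rhd_sub_integral_rhd hP hQ, B.rhd_apply hP, B.rhd_apply hQ, B.rhd_apply hQ,
    B.rhd_apply hP, B.leibniz, add_sub_cancel_right]

end ContinuousLieBracket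

/-- Continuous curves `ℝ → E`, as a synonym of `C(ℝ, E)` on which multiplication is the
operation `▷` of the bracket `B` instead of any pointwise product. -/
def LieCurve {𝕜 E : Type*} [NontriviallyNormedField 𝕜] [NormedAddCommGroup E] [NormedSpace 𝕜 E]
    (_B : ContinuousLieBracket 𝕜 E) : Type _ :=
  C(ℝ, E)

namespace LieCurve

variable {𝕜 E : Type*} [RCLike 𝕜] [NormedAddCommGroup E] [NormedSpace 𝕜 E]
  {B : ContinuousLieBracket 𝕜 E}

instance : FunLike (LieCurve B) ℝ E := inferInstanceAs (FunLike C(ℝ, E) ℝ E)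

instance : AddCommGroup (LieCurve B) := inferInstanceAs (AddCommGroup C(ℝ, E))

instance : Module 𝕜 (LieCurve B) := inferInstanceAs (Module 𝕜 C(ℝ, E))

@[ext]
theorem ext {p q : LieCurve B} (h : ∀ t, p t = q t) : p = q := DFunLike.ext p q h

theorem continuous_coe (p : LieCurve B) : Continuous p := ContinuousMap.continuous (f := p)

theorem coe_zero : ⇑(0 : LieCurve B) = 0 := rfl

theorem coe_add (p q : LieCurve B) : ⇑(p + q) = p + q := rfl

theorem coe_neg (p : LieCurve B) : ⇑(-p) = -p := rfl

theorem coe_smul (c : 𝕜) (p : LieCurve B) : ⇑(c • p) = c • ⇑p := rfl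

variable [NormedSpace ℝ E] [CompleteSpace E]

noncomputable instance : Mul (LieCurve B) where
  mul p q := ⟨B.rhd p q, B.continuous_rhd p.continuous_coe q.continuous_coe⟩

theorem coe_mul (p q : LieCurve B) : ⇑(p * q) = B.rhd p q := rfl

theorem mul_apply (p q : LieCurve B) (t : ℝ) :
    (p * q) t = B.toBilin (∫ u in (0 : ℝ)..t, p u) (q t) :=
  B.rhd_apply p.continuous_coe q t

noncomputable instance : NonUnitalNonAssocRing (LieCurve B) where
  left_distrib p q r := by
    ext t
    simp only [coe_add, Pi.add_apply, mul_apply, map_add]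
  right_distrib p q r := by
    ext t
    simp only [coe_add, Pi.add_apply, mul_apply, intervalIntegral.integral_add
      (p.continuous_coe.intervalIntegrable 0 t) (q.continuous_coe.intervalIntegrable 0 t),
      map_add, add_apply]
  zero_mul p := by
    ext t
    simp only [coe_zero, Pi.zero_apply, mul_apply, intervalIntegral.integral_zero, map_zero,
      zero_apply]
  mul_zero p := by
    ext t
    simp only [coe_zero, Pi.zero_apply, mul_apply, map_zero]

variable [IsScalarTower ℝ 𝕜 E]

noncomputable instance : LeftPreLieRing (LieCurve B) where
  assoc_symm' p q r :=
    DFunLike.coe_injective (B.rhd_rhd_sub_rhd_rhd p.continuous_coe q.continuous_coe r)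

noncomputable instance : LeftPreLieAlgebra 𝕜 (LieCurve B) where
  smul_assoc c p q := by
    ext t
    simp only [smul_eq_mul, coe_smul, Pi.smul_apply, mul_apply, intervalIntegral.integral_smul,
      map_smul, smul_apply]
  smul_comm c p q := by
    ext t
    simp only [smul_eq_mul, coe_smul, Pi.smul_apply, mul_apply, map_smul]

end LieCurve

theorem magnus_R4_general {𝕜 E : Type*} [RCLike 𝕜] [NormedAddCommGroup E] [NormedSpace 𝕜 E]
    [NormedSpace ℝ E] [IsScalarTower ℝ 𝕜 E] [CompleteSpace E] (B : ContinuousLieBracket 𝕜 E)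
    (A : ℝ → E) (hA : Continuous A) (R₁ R₂ R₃ R₄ : ℝ → E)
    (h1 : R₁ = A)
    (h2 : R₂ = -((1 / 2 : 𝕜) • B.rhd A A))
    (h3 : R₃ = (1 / 4 : 𝕜) • B.rhd (B.rhd A A) A + (1 / 12 : 𝕜) • B.rhd A (B.rhd A A))
    (h4 : R₄
        + (1 / 2 : 𝕜) • (B.rhd R₁ R₃ + B.rhd R₂ R₂ + B.rhd R₃ R₁)
        + (1 / 6 : 𝕜) • (B.rhd R₁ (B.rhd R₁ R₂) + B.rhd R₁ (B.rhd R₂ R₁)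
          + B.rhd R₂ (B.rhd R₁ R₁))
        + (1 / 24 : 𝕜) • B.rhd R₁ (B.rhd R₁ (B.rhd R₁ R₁)) = 0) :
    R₄ = -((1 / 6 : 𝕜) • B.rhd (B.rhd (B.rhd A A) A) A)
        - (1 / 12 : 𝕜) • B.rhd A (B.rhd (B.rhd A A) A) := by
  subst h1 h2 h3
  let a : LieCurve B := ContinuousMap.mk R₁ hA
  have coe_a : ⇑a = R₁ := rfl
  have reduction := congrArg (⇑)
    (magnus_order_four_of_leftPreLieAlgebra (K := 𝕜) (a := a) rfl rfl)
  simp only [LieCurve.coe_add, LieCurve.coe_neg, LieCurve.coe_smul, LieCurve.coe_mul, coe_a]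
    at reduction
  linear_combination (norm := module) h4 - reduction

attribute [local instance] LieRing.ofAssociativeRing in
/-- The commutator `XY - YX` as a continuous Lie bracket on square matrices. -/
noncomputable def matrixCommutator (𝕜 m : Type*) [RCLike 𝕜] [Fintype m] [DecidableEq m] :
    ContinuousLieBracket 𝕜 (Matrix m m 𝕜) where
  toBilin := (LieAlgebra.ad 𝕜 (Matrix m m 𝕜)).toLinearMap.toContinuousBilinearMap
  self_eq_zero := lie_self
  leibniz := leibniz_lie

theorem rhd_eq_matrixCommutator_rhd {n : ℕ} : rhd = (matrixCommutator ℂ (Fin n)).rhd := rfl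

/-- The fourth Magnus term: if `R₁ = A`, `R₂ = −(1/2) A ▷ A`,
`R₃ = (1/4)(A ▷ A) ▷ A + (1/12) A ▷ (A ▷ A)`, and `R₄` satisfies the
order-ε⁴ Magnus relation, then
`R₄ = −(1/6)((A ▷ A) ▷ A) ▷ A − (1/12) A ▷ ((A ▷ A) ▷ A)`. -/
theorem magnus_R4 {n : ℕ} (A : ℝ → Matrix (Fin n) (Fin n) ℂ)
    (hA : Continuous A)
    (R₁ R₂ R₃ R₄ : ℝ → Matrix (Fin n) (Fin n) ℂ)
    (h1 : R₁ = A)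
    (h2 : R₂ = -((1/2 : ℂ) • rhd A A))
    (h3 : R₃ = (1/4 : ℂ) • rhd (rhd A A) A + (1/12 : ℂ) • rhd A (rhd A A))
    (h4 : R₄
        + (1/2 : ℂ) • (rhd R₁ R₃ + rhd R₂ R₂ + rhd R₃ R₁)
        + (1/6 : ℂ) • (rhd R₁ (rhd R₁ R₂) + rhd R₁ (rhd R₂ R₁) + rhd R₂ (rhd R₁ R₁))
        + (1/24 : ℂ) • rhd R₁ (rhd R₁ (rhd R₁ R₁)) = 0) :
    R₄ = -((1/6 : ℂ) • rhd (rhd (rhd A A) A) A)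
        - (1/12 : ℂ) • rhd A (rhd (rhd A A) A) := by
  simp only [rhd_eq_matrixCommutator_rhd] at *
  exact magnus_R4_general _ A hA R₁ R₂ R₃ R₄ h1 h2 h3 h4
end

section
/- Let A : ℝ → Matrix n n ℂ be continuous. Then for all t ∈ ℝ: ∫₀ᵗ ( (1/4)((A ▷ A) ▷ A)(τ) + (1/12)(A ▷ (A ▷ A))(τ) ) dτ = (1/3) ∫₀ᵗ ∫₀^{t₁} ∫₀^{t₂} [A(t₁), [A(t₂), A(t₃)]] dt₃ dt₂ dt₁ − (1/6) ∫₀ᵗ ∫₀^{t₁} ∫₀^{t₂} [A(t₂), [A(t₁), A(t₃)]] dt₃ dt₂ dt₁. -/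
attribute [local instance] Matrix.normedAddCommGroup Matrix.normedSpace

/-- The commutator `[X,Y] = XY − YX` of matrices. -/
noncomputable def mcomm {n : ℕ} (X Y : Matrix (Fin n) (Fin n) ℂ) : Matrix (Fin n) (Fin n) ℂ :=
  X * Y - Y * X

/-!
Both summands of the integrand become integrals over the triangle `0 ≤ t₃ ≤ t₂ ≤ t₁`. For
`(A ▷ A) ▷ A` this is the definition of `▷`. For `A ▷ (A ▷ A)` one gets an integral over the square
`[0, t₁]²`, which integration by parts splits along the diagonal into two triangles. Antisymmetry
and the Jacobi identity turn the integrands into `[A(t₁), [A(t₂), A(t₃)]]` and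
`[A(t₁), [A(t₂), A(t₃)]] - 2 • [A(t₂), [A(t₁), A(t₃)]]`, so the coefficients are
`1/4 + 1/12 = 1/3` and `-2/12 = -1/6`.
-/

section IntegralTriangle

variable {E F G : Type*} [NormedAddCommGroup E] [NormedSpace ℝ E] [CompleteSpace E]
  [NormedAddCommGroup F] [NormedSpace ℝ F] [CompleteSpace F]
  [NormedAddCommGroup G] [NormedSpace ℝ G] [CompleteSpace G]

lemma bilin_integral_integral_eq_integral_triangle (M : E →L[ℝ] F →L[ℝ] G)
    {f : ℝ → E} {g : ℝ → F} (hf : Continuous f) (hg : Continuous g) (a b : ℝ) :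
    M (∫ s in a..b, f s) (∫ s in a..b, g s) =
      ∫ s in a..b, ∫ u in a..s, (M (f s) (g u) + M (f u) (g s)) := by
  have inner_integral (s : ℝ) : ∫ u in a..s, (M (f s) (g u) + M (f u) (g s)) =
      M (∫ u in a..s, f u) (g s) + M (f s) (∫ u in a..s, g u) := by
    rw [intervalIntegral.integral_add (Continuous.intervalIntegrable (by fun_prop) _ _)
        (Continuous.intervalIntegrable (by fun_prop) _ _),
      (M (f s)).intervalIntegral_comp_comm (hg.intervalIntegrable _ _), add_comm]
    congr 1
    exact (M.flip (g s)).intervalIntegral_comp_comm (hf.intervalIntegrable _ _)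
  have hasDerivAt_bilin (s : ℝ) :
      HasDerivAt (fun s => M (∫ u in a..s, f u) (∫ u in a..s, g u))
        (∫ u in a..s, (M (f s) (g u) + M (f u) (g s))) s := by
    rw [inner_integral]
    exact M.hasDerivAt_of_bilinear (fun _ => (hf.integral_hasStrictDerivAt a s).hasDerivAt)
      (fun _ => (hg.integral_hasStrictDerivAt a s).hasDerivAt)
  have continuous_deriv :
      Continuous fun s => ∫ u in a..s, (M (f s) (g u) + M (f u) (g s)) := by fun_prop
  rw [intervalIntegral.integral_eq_sub_of_hasDerivAt (fun s _ => hasDerivAt_bilin s)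
    (continuous_deriv.intervalIntegrable a b)]
  simp

end IntegralTriangle

section PreLie

variable {E : Type*} [NormedAddCommGroup E] [NormedSpace ℝ E]

/-- A continuous bilinear map is a Lie bracket if it is alternating and satisfies the Jacobi
identity, stated as in `leibniz_lie`. The bracket is unbundled because the instances `LieRing E` and
`NormedAddCommGroup E` would carry unrelated additions. -/
structure IsLieBracket (L : E →L[ℝ] E →L[ℝ] E) : Prop where
  self (x : E) : L x x = 0
  leibniz (x y z : E) : L x (L y z) = L (L x y) z + L y (L x z)

lemma IsLieBracket.neg {L : E →L[ℝ] E →L[ℝ] E} (hL : IsLieBracket L) (x y : E) :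
    -L x y = L y x := by
  have h : L (x + y) (x + y) = 0 := hL.self _
  simp only [map_add, add_apply, hL.self, zero_add, add_zero] at h
  exact neg_eq_of_add_eq_zero_left h

/-- The product `(P ▷ Q)(t) = ∫₀ᵗ L(P(u), Q(t)) du` of curves; for matrices and the commutator
bracket it is `rhd`. When `L` is a Lie bracket, it is the pre-Lie product of the Magnus
expansion. -/
noncomputable def preLieProd (L : E →L[ℝ] E →L[ℝ] E) (P Q : ℝ → E) : ℝ → E :=
  fun t => ∫ u in (0 : ℝ)..t, L (P u) (Q t)

variable [CompleteSpace E] {L : E →L[ℝ] E →L[ℝ] E} {P Q A : ℝ → E}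

lemma preLieProd_apply (hP : Continuous P) (Q : ℝ → E) (t : ℝ) :
    preLieProd L P Q t = L (∫ u in (0 : ℝ)..t, P u) (Q t) :=
  (L.flip (Q t)).intervalIntegral_comp_comm (hP.intervalIntegrable _ _)

lemma preLieProd_preLieProd_left (hP : Continuous P) (Q R : ℝ → E) (t : ℝ) :
    preLieProd L (preLieProd L P Q) R t =
      ∫ s in (0 : ℝ)..t, ∫ u in (0 : ℝ)..s, L (L (P u) (Q s)) (R t) :=
  intervalIntegral.integral_congr fun s _ =>
    ((L.flip (R t)).intervalIntegral_comp_comm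
      (((L.flip (Q s)).continuous.comp hP).intervalIntegrable _ _)).symm

lemma preLieProd_preLieProd_right (hP : Continuous P) (hQ : Continuous Q) (R : ℝ → E) (t : ℝ) :
    preLieProd L P (preLieProd L Q R) t = ∫ s in (0 : ℝ)..t, ∫ u in (0 : ℝ)..s,
      (L (P s) (L (Q u) (R t)) + L (P u) (L (Q s) (R t))) := by
  rw [preLieProd_apply hP, preLieProd_apply hQ]
  exact bilin_integral_integral_eq_integral_triangle
    (L.bilinearComp (.id ℝ E) (L.flip (R t))) hP hQ 0 t

lemma IsLieBracket.preLieProd_preLieProd_left_self (hL : IsLieBracket L) (hA : Continuous A)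
    (t : ℝ) :
    preLieProd L (preLieProd L A A) A t =
      ∫ s in (0 : ℝ)..t, ∫ u in (0 : ℝ)..s, L (A t) (L (A s) (A u)) := by
  have antisymm_twice (x y z : E) : L (L z y) x = L x (L y z) := by
    rw [← hL.neg x, ← hL.neg y, map_neg, neg_neg]
  simp only [preLieProd_preLieProd_left hA, antisymm_twice]

lemma IsLieBracket.preLieProd_preLieProd_right_self (hL : IsLieBracket L) (hA : Continuous A)
    (t : ℝ) :
    preLieProd L A (preLieProd L A A) t =
      (∫ s in (0 : ℝ)..t, ∫ u in (0 : ℝ)..s, L (A t) (L (A s) (A u)))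
        - (2 : ℝ) • ∫ s in (0 : ℝ)..t, ∫ u in (0 : ℝ)..s, L (A s) (L (A t) (A u)) := by
  have jacobi (x y z : E) :
      L y (L z x) + L z (L y x) = L x (L y z) - (2 : ℝ) • L y (L x z) := by
    have antisymm_inner : -L y (L x z) = L y (L z x) := by rw [← map_neg, hL.neg]
    linear_combination (norm := module)
      (-2 : ℝ) • antisymm_inner + hL.neg x (L y z) - hL.leibniz y z x
  simp only [preLieProd_preLieProd_right hA hA, jacobi,
    ← intervalIntegral.integral_smul]
  rw [← intervalIntegral.integral_sub (Continuous.intervalIntegrable (by fun_prop) _ _)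
    (Continuous.intervalIntegrable (by fun_prop) _ _)]
  refine intervalIntegral.integral_congr fun s _ => ?_
  exact intervalIntegral.integral_sub (Continuous.intervalIntegrable (by fun_prop) _ _)
    (Continuous.intervalIntegrable (by fun_prop) _ _)

theorem magnus_Omega3_iterated_integral_general (hL : IsLieBracket L) (hA : Continuous A) (t : ℝ) :
    (∫ τ in (0 : ℝ)..t, ((1 / 4 : ℝ) • preLieProd L (preLieProd L A A) A τ
        + (1 / 12 : ℝ) • preLieProd L A (preLieProd L A A) τ)) =
      (1 / 3 : ℝ) • (∫ t₁ in (0 : ℝ)..t, ∫ t₂ in (0 : ℝ)..t₁, ∫ t₃ in (0 : ℝ)..t₂,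
          L (A t₁) (L (A t₂) (A t₃)))
        - (1 / 6 : ℝ) • (∫ t₁ in (0 : ℝ)..t, ∫ t₂ in (0 : ℝ)..t₁, ∫ t₃ in (0 : ℝ)..t₂,
          L (A t₂) (L (A t₁) (A t₃))) := by
  rw [← intervalIntegral.integral_smul, ← intervalIntegral.integral_smul,
    ← intervalIntegral.integral_sub (Continuous.intervalIntegrable (by fun_prop) _ _)
      (Continuous.intervalIntegrable (by fun_prop) _ _)]
  refine intervalIntegral.integral_congr fun τ _ => ?_
  simp only [hL.preLieProd_preLieProd_left_self hA, hL.preLieProd_preLieProd_right_self hA]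
  module

end PreLie

/-- The commutator of complex matrices as a continuous bilinear map over `ℝ`. It is `mcomm` up to
definitional unfolding. -/
noncomputable def commutatorL (n : ℕ) :
    Matrix (Fin n) (Fin n) ℂ →L[ℝ] Matrix (Fin n) (Fin n) ℂ →L[ℝ] Matrix (Fin n) (Fin n) ℂ :=
  (LinearMap.mul ℝ (Matrix (Fin n) (Fin n) ℂ)
    - (LinearMap.mul ℝ (Matrix (Fin n) (Fin n) ℂ)).flip).toContinuousBilinearMap

lemma isLieBracket_commutatorL (n : ℕ) : IsLieBracket (commutatorL n) where
  self X := sub_self (X * X)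
  leibniz X Y Z := by
    change mcomm X (mcomm Y Z) = mcomm (mcomm X Y) Z + mcomm Y (mcomm X Z)
    unfold mcomm
    noncomm_ring

/-- The third Magnus term `Ω₃(t) = ∫₀ᵗ ((1/4)(A▷A)▷A + (1/12)A▷(A▷A))(τ) dτ`
coincides with the permutation/descent formula (2.16) of the paper for `n = 3`. -/
theorem magnus_Omega3_iterated_integral {n : ℕ}
    (A : ℝ → Matrix (Fin n) (Fin n) ℂ) (hA : Continuous A) :
    ∀ t : ℝ,
      (∫ τ in (0:ℝ)..t,
          ((1/4 : ℂ) • rhd (rhd A A) A τ + (1/12 : ℂ) • rhd A (rhd A A) τ))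
      = (1/3 : ℂ) • (∫ t₁ in (0:ℝ)..t, ∫ t₂ in (0:ℝ)..t₁, ∫ t₃ in (0:ℝ)..t₂,
            mcomm (A t₁) (mcomm (A t₂) (A t₃)))
        - (1/6 : ℂ) • (∫ t₁ in (0:ℝ)..t, ∫ t₂ in (0:ℝ)..t₁, ∫ t₃ in (0:ℝ)..t₂,
            mcomm (A t₂) (mcomm (A t₁) (A t₃))) := by
  intro t
  simpa only [← Complex.coe_smul, Complex.ofReal_div, Complex.ofReal_one, Complex.ofReal_ofNat]
    using! magnus_Omega3_iterated_integral_general (isLieBracket_commutatorL n) hA t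
end

section
/- Let ε > 0 and let X : [0,∞) → ℝ² be differentiable with X'(t) = −ε ((‖X(t)‖² − 4)/8) X(t) for all t ≥ 0, and suppose X(0) ≠ 0. Then ‖X(t)‖² → 4 as t → ∞. -/
open Filter

/-! The squared norm `r = ‖X‖²` of a solution of the radial equation `X' = a (K - ‖X‖²) X` solves
the logistic equation `r' = 2 a (K - r) r`. Its reciprocal satisfies a linear equation with constant
coefficients, which suggests `r = K / D` with `D(t) = 1 + (K / r(0) - 1) exp (-2 a K t)`. To avoid
dividing by `r`, one checks instead that `w = r D - K` solves `w' = -2 a r w` with `w(0) = 0`, so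
that `w = 0` by Grönwall's inequality. Since `D → 1`, it follows that `r → K`. -/

open Set Topology

section NormedSpace

variable {E : Type*} [NormedAddCommGroup E] [NormedSpace ℝ E]

-- To first order `X` moves along the line spanned by `X t`, on which the norm is linear near `X t`.
theorem hasDerivWithinAt_norm_of_smul_self {X : ℝ → E} {c t : ℝ} {s : Set ℝ}
    (hX : HasDerivWithinAt X (c • X t) s t) :
    HasDerivWithinAt (fun u => ‖X u‖) (c * ‖X t‖) s t := by
  rw [hasDerivWithinAt_iff_isLittleO] at hX ⊢
  refine (Asymptotics.IsBigO.of_bound' ?_).trans_isLittleO hX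
  have factor_pos : ∀ᶠ u in 𝓝[s] t, 0 < 1 + (u - t) * c := by
    have hcont : Continuous fun u : ℝ => 1 + (u - t) * c := by fun_prop
    exact nhdsWithin_le_nhds (hcont.continuousAt.eventually_const_lt (by simp))
  filter_upwards [factor_pos] with u hu
  have norm_linear : ‖(1 + (u - t) * c) • X t‖ = (1 + (u - t) * c) * ‖X t‖ :=
    norm_smul_of_nonneg hu.le _
  calc ‖‖X u‖ - ‖X t‖ - (u - t) • (c * ‖X t‖)‖
      = ‖‖X u‖ - ‖(1 + (u - t) * c) • X t‖‖ := by
        rw [norm_linear, smul_eq_mul]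
        ring_nf
    _ ≤ ‖X u - (1 + (u - t) * c) • X t‖ := abs_norm_sub_norm_le _ _
    _ = ‖X u - X t - (u - t) • c • X t‖ := by
        rw [add_smul, one_smul, mul_smul, sub_sub]

theorem hasDerivWithinAt_norm_sq_of_smul_self {X : ℝ → E} {c t : ℝ} {s : Set ℝ}
    (hX : HasDerivWithinAt X (c • X t) s t) :
    HasDerivWithinAt (fun u => ‖X u‖ ^ 2) (2 * c * ‖X t‖ ^ 2) s t :=
  ((hasDerivWithinAt_norm_of_smul_self hX).pow 2).congr_deriv (by push_cast; ring)

theorem eq_zero_of_hasDerivWithinAt_smul_self {u : ℝ → E} {g : ℝ → ℝ} {t₀ t : ℝ}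
    (hg : ContinuousOn g (Ici t₀))
    (hu : ∀ s ∈ Ici t₀, HasDerivWithinAt u (g s • u s) (Ici t₀) s)
    (hu₀ : u t₀ = 0) (ht : t₀ ≤ t) : u t = 0 := by
  obtain ⟨C, hC⟩ :=
    isCompact_Icc.exists_bound_of_continuousOn (hg.mono (Icc_subset_Ici_self : Icc t₀ t ⊆ Ici t₀))
  refine eq_zero_of_abs_deriv_le_mul_abs_self_of_eq_zero_right (K := C)
    (fun s hs => ((hu s hs.1).mono Icc_subset_Ici_self).continuousWithinAt)
    (fun s hs => (hu s hs.1).mono (Ici_subset_Ici.2 hs.1)) hu₀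
    (fun s hs => ?_) t (right_mem_Icc.2 ht)
  rw [norm_smul]
  gcongr
  exact hC s (Ico_subset_Icc_self hs)

end NormedSpace

section Logistic

variable {r : ℝ → ℝ} {a K : ℝ}

theorem logistic_mul_eq (hr : ∀ t ∈ Ici 0, HasDerivWithinAt r (a * (K - r t) * r t) (Ici 0) t)
    (hr₀ : r 0 ≠ 0) {t : ℝ} (ht : 0 ≤ t) :
    r t * (1 + (K / r 0 - 1) * Real.exp (-(a * K * t))) = K := by
  set D : ℝ → ℝ := fun s => 1 + (K / r 0 - 1) * Real.exp (-(a * K * s)) with hD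
  have hasDerivAt_D (s : ℝ) : HasDerivAt D (a * K * (1 - D s)) s :=
    (((((hasDerivAt_id s).const_mul (a * K)).neg).exp.const_mul (K / r 0 - 1)).const_add
      1).congr_deriv (by simp only [hD, id, Pi.neg_apply]; ring)
  have hasDeriv_defect (s : ℝ) (hs : s ∈ Ici 0) :
      HasDerivWithinAt (fun s => r s * D s - K) ((-a * r s) • (r s * D s - K)) (Ici 0) s :=
    (((hr s hs).mul (hasDerivAt_D s).hasDerivWithinAt).sub_const K).congr_deriv
      (by rw [smul_eq_mul]; ring)
  have coeff_continuous : ContinuousOn (fun s => -a * r s) (Ici 0) :=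
    continuousOn_const.mul fun s hs => (hr s hs).continuousWithinAt
  have defect_zero : r 0 * D 0 - K = 0 := by
    simp only [hD, mul_zero, neg_zero, Real.exp_zero]
    field_simp
    ring
  exact sub_eq_zero.1 (eq_zero_of_hasDerivWithinAt_smul_self (u := fun s => r s * D s - K)
    coeff_continuous hasDeriv_defect defect_zero ht)

theorem tendsto_logistic_atTop (haK : 0 < a * K)
    (hr : ∀ t ∈ Ici 0, HasDerivWithinAt r (a * (K - r t) * r t) (Ici 0) t) (hr₀ : r 0 ≠ 0) :
    Tendsto r atTop (𝓝 K) := by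
  have tendsto_exp : Tendsto (fun t => Real.exp (-(a * K * t))) atTop (𝓝 0) :=
    Real.tendsto_exp_neg_atTop_nhds_zero.comp (tendsto_id.const_mul_atTop haK)
  have tendsto_denom :
      Tendsto (fun t => 1 + (K / r 0 - 1) * Real.exp (-(a * K * t))) atTop (𝓝 1) := by
    simpa using (tendsto_exp.const_mul (K / r 0 - 1)).const_add 1
  have tendsto_closed_form :
      Tendsto (fun t => K / (1 + (K / r 0 - 1) * Real.exp (-(a * K * t)))) atTop (𝓝 K) := by
    simpa only [div_one, Pi.div_def] using
      (tendsto_const_nhds (x := K)).div tendsto_denom one_ne_zero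
  refine tendsto_closed_form.congr' ?_
  filter_upwards [eventually_ge_atTop 0] with t ht
  have closed_form := logistic_mul_eq hr hr₀ ht
  have denom_ne_zero := right_ne_zero_of_mul (closed_form.trans_ne (right_ne_zero_of_mul haK.ne'))
  exact ((eq_div_iff denom_ne_zero).2 closed_form).symm

end Logistic

theorem vdp_averaged_limit_cycle_general {E : Type*} [NormedAddCommGroup E] [NormedSpace ℝ E]
    {a K : ℝ} (ha : 0 < a) (hK : 0 < K) {X : ℝ → E}
    (hX : ∀ t ∈ Ici 0, HasDerivWithinAt X ((a * (K - ‖X t‖ ^ 2)) • X t) (Ici 0) t)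
    (hX₀ : X 0 ≠ 0) :
    Tendsto (fun t => ‖X t‖ ^ 2) atTop (𝓝 K) := by
  have norm_sq_logistic (t : ℝ) (ht : t ∈ Ici 0) :
      HasDerivWithinAt (fun t => ‖X t‖ ^ 2) (2 * a * (K - ‖X t‖ ^ 2) * ‖X t‖ ^ 2) (Ici 0) t :=
    (hasDerivWithinAt_norm_sq_of_smul_self (hX t ht)).congr_deriv (by ring)
  exact tendsto_logistic_atTop (by positivity) norm_sq_logistic (by simpa using hX₀)

/-- Every nonzero solution of the first-order averaged Van der Pol system
`X' = −ε((‖X‖² − 4)/8) X` (with `ε > 0`, Euclidean norm on `ℝ²`) converges to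
the limit cycle `‖X‖² = 4`. -/
theorem vdp_averaged_limit_cycle (ε : ℝ) (hε : 0 < ε)
    (X : ℝ → EuclideanSpace ℝ (Fin 2))
    (hX : ∀ t : ℝ, 0 ≤ t → HasDerivAt X (-(ε * ((‖X t‖ ^ 2 - 4) / 8)) • X t) t)
    (h0 : X 0 ≠ 0) :
    Tendsto (fun t => ‖X t‖ ^ 2) atTop (nhds 4) :=
  vdp_averaged_limit_cycle_general (a := ε / 8) (by positivity) four_pos
    (fun t ht => ((hX t ht).congr_deriv (by congr 1; ring)).hasDerivWithinAt) h0
end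

section
/- For every X = (X₁, X₂) ∈ ℝ², −(1/(4π)) ∫₀^{2π} ∫₀^{t} ( ξ_t(X) (∇ξ_τ(X) · V_t) V_τ − ξ_τ(X) (∇ξ_t(X) · V_τ) V_t ) dτ dt = (1/256) ( −X₂ (32 − 24X₂² + 5X₂⁴ − 88X₁² + 21X₁⁴ + 10X₁²X₂²), X₁ (21X₁⁴ + 32 − 88X₁² + 40X₂² + 10X₁²X₂² + 5X₂⁴) ), where ∇ξ_t(X) denotes the gradient of x ↦ ξ_t(x) at X and · the Euclidean inner product on ℝ². -/
/-!
Write a `2π`-periodic field as `g t = A₀ + ∑ n, (cos (n t) A n + sin (n t) B n)`. The Lie bracket at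
a point is an alternating bilinear form of the 1-jets of the two fields there, so the second-order
average only requires integrating `β (u t) (u τ)` for an alternating form `β` and a trigonometric
polynomial `u` with values in jets. Integration by parts disposes of the secular term produced by
`A₀`, Parseval's identity does the rest, and what remains is `∑ n, n⁻¹ [B n, A₀ - A n / 2]`.

In the complex coordinate `z = x₁ + i x₂`, with conjugate `w`, the Van der Pol field is
`(z s - w s e^{2it}) / 2 + (w³ e^{4it} - z³ e^{-2it}) / 8` with `s = 1 - z w / 4`, so only the
harmonics `2` and `4` contribute.
-/

open Real

/-- The rotating vector `V_t = (−sin t, cos t)` of the Van der Pol system. -/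
noncomputable def vdpV (t : ℝ) : ℝ × ℝ := (-sin t, cos t)

/-- The scalar factor `ξ_t(x) = (1 − (cos t·x₁ + sin t·x₂)²)(−sin t·x₁ + cos t·x₂)`. -/
noncomputable def vdpXi (t : ℝ) (x : ℝ × ℝ) : ℝ :=
  (1 - (cos t * x.1 + sin t * x.2) ^ 2) * (-sin t * x.1 + cos t * x.2)

open VectorField

section Orthogonality

lemma integral_cos_int_mul (k : ℤ) :
    ∫ t in (0 : ℝ)..(2 * π), cos (k * t) = if k = 0 then 2 * π else 0 := by
  split_ifs with hk
  · simp [hk]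
  · have hk' : (k : ℝ) ≠ 0 := Int.cast_ne_zero.mpr hk
    have hsin : sin (k * (2 * π)) = 0 := by simpa [mul_assoc] using sin_int_mul_pi (k * 2)
    simp [intervalIntegral.integral_comp_mul_left cos hk', hsin]

lemma integral_sin_int_mul (k : ℤ) : ∫ t in (0 : ℝ)..(2 * π), sin (k * t) = 0 := by
  rcases eq_or_ne k 0 with rfl | hk
  · simp
  · have hk' : (k : ℝ) ≠ 0 := Int.cast_ne_zero.mpr hk
    simp [intervalIntegral.integral_comp_mul_left sin hk']

lemma integral_cos_int_mul_mul_cos_int_mul (m n : ℤ) :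
    ∫ t in (0 : ℝ)..(2 * π), cos (m * t) * cos (n * t)
      = (if m = n then π else 0) + if m = -n then π else 0 := by
  have product_to_sum (t : ℝ) : cos (m * t) * cos (n * t)
      = 2⁻¹ * (cos ((m - n : ℤ) * t) + cos ((m + n : ℤ) * t)) := by
    push_cast
    linear_combination (norm := ring_nf) 2⁻¹ * two_mul_cos_mul_cos (m * t) (n * t)
  simp_rw [product_to_sum]
  rw [intervalIntegral.integral_const_mul, intervalIntegral.integral_add
    (Continuous.intervalIntegrable (by fun_prop) _ _)
    (Continuous.intervalIntegrable (by fun_prop) _ _),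
    integral_cos_int_mul, integral_cos_int_mul]
  simp only [sub_eq_zero, add_eq_zero_iff_eq_neg]
  split_ifs <;> ring

lemma integral_sin_int_mul_mul_sin_int_mul (m n : ℤ) :
    ∫ t in (0 : ℝ)..(2 * π), sin (m * t) * sin (n * t)
      = (if m = n then π else 0) - if m = -n then π else 0 := by
  have product_to_sum (t : ℝ) : sin (m * t) * sin (n * t)
      = 2⁻¹ * (cos ((m - n : ℤ) * t) - cos ((m + n : ℤ) * t)) := by
    push_cast
    linear_combination (norm := ring_nf) 2⁻¹ * two_mul_sin_mul_sin (m * t) (n * t)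
  simp_rw [product_to_sum]
  rw [intervalIntegral.integral_const_mul, intervalIntegral.integral_sub
    (Continuous.intervalIntegrable (by fun_prop) _ _)
    (Continuous.intervalIntegrable (by fun_prop) _ _),
    integral_cos_int_mul, integral_cos_int_mul]
  simp only [sub_eq_zero, add_eq_zero_iff_eq_neg]
  split_ifs <;> ring

lemma integral_sin_int_mul_mul_cos_int_mul (m n : ℤ) :
    ∫ t in (0 : ℝ)..(2 * π), sin (m * t) * cos (n * t) = 0 := by
  have product_to_sum (t : ℝ) : sin (m * t) * cos (n * t)
      = 2⁻¹ * (sin ((m - n : ℤ) * t) + sin ((m + n : ℤ) * t)) := by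
    push_cast
    linear_combination (norm := ring_nf) 2⁻¹ * two_mul_sin_mul_cos (m * t) (n * t)
  simp_rw [product_to_sum]
  rw [intervalIntegral.integral_const_mul, intervalIntegral.integral_add
    (Continuous.intervalIntegrable (by fun_prop) _ _)
    (Continuous.intervalIntegrable (by fun_prop) _ _),
    integral_sin_int_mul, integral_sin_int_mul, add_zero, mul_zero]

end Orthogonality

/-- The trigonometric polynomial with vector coefficients `a n` of `cos (n t)` and `b n` of
`sin (n t)`, for `n ∈ s`. No norm is required, so that the coefficients may be vector fields. -/
noncomputable def trigSum {F : Type*} [AddCommGroup F] [Module ℝ F] (s : Finset ℕ) (a b : ℕ → F)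
    (t : ℝ) : F :=
  ∑ n ∈ s, (cos (n * t) • a n + sin (n * t) • b n)

section TrigSum

variable {E F : Type*} [NormedAddCommGroup E] [NormedSpace ℝ E] [NormedAddCommGroup F]
  [NormedSpace ℝ F] {s : Finset ℕ}

@[fun_prop]
lemma continuous_trigSum (s : Finset ℕ) (a b : ℕ → F) : Continuous (trigSum s a b) := by
  unfold trigSum
  fun_prop

lemma hasDerivAt_trigSum (s : Finset ℕ) (a b : ℕ → F) (t : ℝ) :
    HasDerivAt (trigSum s a b)
      (trigSum s (fun n ↦ (n : ℝ) • b n) (fun n ↦ -(n : ℝ) • a n) t) t := by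
  refine HasDerivAt.fun_sum fun n _ ↦ ?_
  have hmul : HasDerivAt (fun t : ℝ ↦ n * t) n t := hasDerivAt_const_mul _
  refine ((hmul.cos.smul_const (a n)).add (hmul.sin.smul_const (b n))).congr_deriv ?_
  module

lemma hasDerivAt_trigSum_primitive (hs : 0 ∉ s) (a b : ℕ → F) (t : ℝ) :
    HasDerivAt (trigSum s (fun n ↦ -(n : ℝ)⁻¹ • b n) (fun n ↦ (n : ℝ)⁻¹ • a n))
      (trigSum s a b t) t := by
  refine (hasDerivAt_trigSum s _ _ t).congr_deriv (Finset.sum_congr rfl fun n hn ↦ ?_)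
  have hn' : (n : ℝ) ≠ 0 := Nat.cast_ne_zero.mpr (ne_of_mem_of_not_mem hn hs)
  simp [smul_smul, hn']

lemma trigSum_zero (s : Finset ℕ) (a b : ℕ → F) : trigSum s a b 0 = ∑ n ∈ s, a n := by
  simp [trigSum]

lemma trigSum_two_pi (s : Finset ℕ) (a b : ℕ → F) : trigSum s a b (2 * π) = trigSum s a b 0 := by
  have hsin (n : ℕ) : sin (n * (2 * π)) = 0 := by simpa [mul_assoc] using sin_nat_mul_pi (n * 2)
  simp [trigSum, cos_nat_mul_two_pi, hsin]

lemma integral_trigSum [CompleteSpace F] (hs : 0 ∉ s) (a b : ℕ → F) :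
    ∫ t in (0 : ℝ)..(2 * π), trigSum s a b t = 0 := by
  rw [intervalIntegral.integral_eq_sub_of_hasDerivAt
    (fun t _ ↦ hasDerivAt_trigSum_primitive hs a b t)
    ((continuous_trigSum s a b).intervalIntegrable _ _), trigSum_two_pi, sub_self]

variable [CompleteSpace E] (β : F →L[ℝ] F →L[ℝ] E)

lemma integral_bilin_harmonic {m : ℕ} (hm : m ≠ 0) (n : ℕ) (a b c d : F) :
    ∫ t in (0 : ℝ)..(2 * π),
        β (cos (m * t) • a + sin (m * t) • b) (cos (n * t) • c + sin (n * t) • d)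
      = if m = n then π • (β a c + β b d) else 0 := by
  have expand (t : ℝ) :
      β (cos (m * t) • a + sin (m * t) • b) (cos (n * t) • c + sin (n * t) • d)
        = (cos (m * t) * cos (n * t)) • β a c + (sin (n * t) * cos (m * t)) • β a d
          + (sin (m * t) * cos (n * t)) • β b c + (sin (m * t) * sin (n * t)) • β b d := by
    simp only [map_add, map_smul, add_apply, smul_apply]
    module
  have hcc := integral_cos_int_mul_mul_cos_int_mul m n
  have hss := integral_sin_int_mul_mul_sin_int_mul m n
  have hsc := integral_sin_int_mul_mul_cos_int_mul m n
  have hcs := integral_sin_int_mul_mul_cos_int_mul n m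
  have hne : (m : ℤ) ≠ -n := by omega
  simp only [Int.cast_natCast, hne, Nat.cast_inj, if_false, add_zero, sub_zero]
    at hcc hss hsc hcs
  simp_rw [expand]
  iterate 3 rw [intervalIntegral.integral_add (Continuous.intervalIntegrable (by fun_prop) _ _)
    (Continuous.intervalIntegrable (by fun_prop) _ _)]
  simp only [intervalIntegral.integral_smul_const, hcc, hss, hsc, hcs]
  split_ifs <;> module

lemma integral_bilin_trigSum (hs : 0 ∉ s) (a b c d : ℕ → F) :
    ∫ t in (0 : ℝ)..(2 * π), β (trigSum s a b t) (trigSum s c d t)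
      = π • ∑ n ∈ s, (β (a n) (c n) + β (b n) (d n)) := by
  have hcont (m n : ℕ) : Continuous fun t : ℝ ↦
      β (cos (m * t) • a m + sin (m * t) • b m) (cos (n * t) • c n + sin (n * t) • d n) :=
    (β.continuous.comp (by fun_prop)).clm_apply (by fun_prop)
  simp only [trigSum, map_sum, sum_apply]
  rw [Finset.smul_sum, intervalIntegral.integral_finsetSum
    fun n _ ↦ (continuous_finsetSum s fun m _ ↦ hcont m n).intervalIntegrable _ _]
  refine Finset.sum_congr rfl fun n hn ↦ ?_
  rw [intervalIntegral.integral_finsetSum fun m _ ↦ (hcont m n).intervalIntegrable _ _,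
    Finset.sum_congr rfl fun m hm ↦
      integral_bilin_harmonic β (ne_of_mem_of_not_mem hm hs) n (a m) (b m) (c n) (d n)]
  simp [hn]

end TrigSum

section Averaging

variable {E F : Type*} [NormedAddCommGroup E] [NormedSpace ℝ E] [NormedAddCommGroup F]
  [NormedSpace ℝ F] {β : F →L[ℝ] F →L[ℝ] E}

lemma eq_neg_swap_of_alternating (hβ : ∀ x, β x x = 0) (x y : F) : β x y = -β y x := by
  have h := hβ (x + y)
  simp only [map_add, add_apply, hβ, zero_add, add_zero] at h
  exact eq_neg_of_add_eq_zero_right h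

variable [CompleteSpace F]

lemma integral_const_add_deriv {v w : ℝ → F} (hv : Continuous v) (hw : ∀ t, HasDerivAt w (v t) t)
    (c : F) (t : ℝ) : ∫ τ in (0 : ℝ)..t, (c + v τ) = t • c + (w t - w 0) := by
  rw [intervalIntegral.integral_add (by simp) (hv.intervalIntegrable _ _),
    intervalIntegral.integral_eq_sub_of_hasDerivAt (fun τ _ ↦ hw τ) (hv.intervalIntegrable _ _),
    intervalIntegral.integral_const, sub_zero]

lemma integral_id_smul_deriv {v w : ℝ → F} (hv : Continuous v) (hw : ∀ t, HasDerivAt w (v t) t)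
    (T : ℝ) : ∫ t in (0 : ℝ)..T, t • v t = T • w T - ∫ t in (0 : ℝ)..T, w t := by
  simpa using intervalIntegral.integral_smul_deriv_eq_deriv_smul (a := 0) (b := T)
    (fun t _ ↦ hasDerivAt_id' t) (fun t _ ↦ hw t) (by simp) (hv.intervalIntegrable _ _)

variable [CompleteSpace E]

lemma integral_alternating_const_add_deriv (hβ : ∀ x, β x x = 0) {v w : ℝ → F}
    (hv : Continuous v) (hw : ∀ t, HasDerivAt w (v t) t) (c : F) (t : ℝ) :
    ∫ τ in (0 : ℝ)..t, β (c + v t) (c + v τ)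
      = β (v t) (w t) + (β c (w t - w 0 - t • v t) + β (w 0) (v t)) := by
  rw [ContinuousLinearMap.intervalIntegral_comp_comm _
    (Continuous.intervalIntegrable (by fun_prop) _ _), integral_const_add_deriv hv hw]
  simp only [map_add, map_sub, map_smul, add_apply, hβ, eq_neg_swap_of_alternating hβ (v t) c,
    eq_neg_swap_of_alternating hβ (v t) (w 0)]
  module

lemma integral_integral_alternating_const_add_deriv (hβ : ∀ x, β x x = 0) {v w : ℝ → F}
    (hv : Continuous v) (hw : ∀ t, HasDerivAt w (v t) t) (c : F) {T : ℝ} (hper : w T = w 0)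
    (hmean : ∫ t in (0 : ℝ)..T, w t = 0) :
    ∫ t in (0 : ℝ)..T, ∫ τ in (0 : ℝ)..t, β (c + v t) (c + v τ)
      = (∫ t in (0 : ℝ)..T, β (v t) (w t)) - (2 * T) • β c (w 0) := by
  have hw_cont : Continuous w := continuous_iff_continuousAt.mpr fun t ↦ (hw t).continuousAt
  have hvw_cont : Continuous fun t ↦ β (v t) (w t) := (β.continuous.comp hv).clm_apply hw_cont
  have hcw_cont : Continuous fun t ↦ β c (w t - w 0 - t • v t) :=
    (β c).continuous.comp (by fun_prop)
  have hwv_cont : Continuous fun t ↦ β (w 0) (v t) := (β (w 0)).continuous.comp hv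
  have mean_v : ∫ t in (0 : ℝ)..T, v t = 0 := by
    rw [intervalIntegral.integral_eq_sub_of_hasDerivAt (fun t _ ↦ hw t)
      (hv.intervalIntegrable _ _), hper, sub_self]
  have secular : ∫ t in (0 : ℝ)..T, (w t - w 0 - t • v t) = -(2 * T) • w 0 := by
    rw [intervalIntegral.integral_sub (Continuous.intervalIntegrable (by fun_prop) _ _)
        (Continuous.intervalIntegrable (by fun_prop) _ _),
      intervalIntegral.integral_sub (hw_cont.intervalIntegrable _ _) (by simp),
      integral_id_smul_deriv hv hw, hmean, hper, intervalIntegral.integral_const]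
    module
  simp_rw [integral_alternating_const_add_deriv hβ hv hw]
  rw [intervalIntegral.integral_add (hvw_cont.intervalIntegrable _ _)
      ((hcw_cont.fun_add hwv_cont).intervalIntegrable _ _),
    intervalIntegral.integral_add (hcw_cont.intervalIntegrable _ _)
      (hwv_cont.intervalIntegrable _ _),
    ContinuousLinearMap.intervalIntegral_comp_comm _
      (Continuous.intervalIntegrable (by fun_prop) _ _),
    ContinuousLinearMap.intervalIntegral_comp_comm _ (hv.intervalIntegrable _ _),
    secular, mean_v, map_smul, map_zero, add_zero, neg_smul, sub_eq_add_neg]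

lemma integral_integral_alternating_const_add_trigSum (hβ : ∀ x, β x x = 0) {s : Finset ℕ}
    (hs : 0 ∉ s) (c : F) (a b : ℕ → F) :
    ∫ t in (0 : ℝ)..(2 * π), ∫ τ in (0 : ℝ)..t, β (c + trigSum s a b t) (c + trigSum s a b τ)
      = -(4 * π) • ∑ n ∈ s, (n : ℝ)⁻¹ • β (b n) (c - (2⁻¹ : ℝ) • a n) := by
  rw [integral_integral_alternating_const_add_deriv hβ (continuous_trigSum s a b)
    (hasDerivAt_trigSum_primitive hs a b) c (trigSum_two_pi s _ _) (integral_trigSum hs _ _),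
    integral_bilin_trigSum β hs, trigSum_zero, map_sum, Finset.smul_sum, Finset.smul_sum,
    Finset.smul_sum, ← Finset.sum_sub_distrib]
  refine Finset.sum_congr rfl fun n _ ↦ ?_
  simp only [map_sub, map_smul, sub_apply, smul_apply, eq_neg_swap_of_alternating hβ (b n)]
  module

end Averaging

section LieBracket

variable {E F : Type*} [NormedAddCommGroup E] [NormedSpace ℝ E] [NormedAddCommGroup F]
  [NormedSpace ℝ F] {x : E}

/-- The 1-jet of `V` at `x`, its value and derivative there. The Lie bracket of two vector fields at
`x` is a function of their 1-jets. -/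
noncomputable def oneJet (x : E) (V : E → F) : F × (E →L[ℝ] F) :=
  (V x, fderiv ℝ V x)

lemma oneJet_add {V W : E → F} (hV : DifferentiableAt ℝ V x) (hW : DifferentiableAt ℝ W x) :
    oneJet x (V + W) = oneJet x V + oneJet x W := by
  simp [oneJet, fderiv_add hV hW]

lemma oneJet_const_smul {V : E → F} (hV : DifferentiableAt ℝ V x) (r : ℝ) :
    oneJet x (r • V) = r • oneJet x V := by
  simp [oneJet, fderiv_const_smul hV]

lemma oneJet_sub {V W : E → F} (hV : DifferentiableAt ℝ V x) (hW : DifferentiableAt ℝ W x) :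
    oneJet x (V - W) = oneJet x V - oneJet x W := by
  simp [oneJet, fderiv_sub hV hW]

lemma oneJet_trigSum {s : Finset ℕ} {A B : ℕ → E → F} (hA : ∀ n ∈ s, DifferentiableAt ℝ (A n) x)
    (hB : ∀ n ∈ s, DifferentiableAt ℝ (B n) x) (t : ℝ) :
    oneJet x (trigSum s A B t) = trigSum s (oneJet x ∘ A) (oneJet x ∘ B) t := by
  have hterm : ∀ n ∈ s, DifferentiableAt ℝ (cos (n * t) • A n + sin (n * t) • B n) x :=
    fun n hn ↦ ((hA n hn).const_smul _).add ((hB n hn).const_smul _)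
  have hsum : oneJet x (trigSum s A B t)
      = ∑ n ∈ s, oneJet x (cos (n * t) • A n + sin (n * t) • B n) := by
    simp [trigSum, oneJet, fderiv_sum hterm, Finset.sum_apply, Prod.ext_iff, Prod.fst_sum,
      Prod.snd_sum]
  rw [hsum]
  refine Finset.sum_congr rfl fun n hn ↦ ?_
  rw [oneJet_add ((hA n hn).const_smul _) ((hB n hn).const_smul _),
    oneJet_const_smul (hA n hn), oneJet_const_smul (hB n hn)]
  rfl

/-- The Lie bracket at a point as a bilinear form of 1-jets. -/
noncomputable def jetBracket (E : Type*) [NormedAddCommGroup E] [NormedSpace ℝ E] :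
    (E × (E →L[ℝ] E)) →L[ℝ] (E × (E →L[ℝ] E)) →L[ℝ] E :=
  let eval := (ContinuousLinearMap.id ℝ (E →L[ℝ] E)).bilinearComp
    (ContinuousLinearMap.snd ℝ E (E →L[ℝ] E)) (ContinuousLinearMap.fst ℝ E (E →L[ℝ] E))
  eval.flip - eval

lemma jetBracket_self (J : E × (E →L[ℝ] E)) : jetBracket E J J = 0 := by
  simp [jetBracket]

lemma lieBracket_eq_jetBracket (V W : E → E) (x : E) :
    lieBracket ℝ V W x = jetBracket E (oneJet x V) (oneJet x W) := by
  simp [lieBracket, jetBracket, oneJet]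

theorem secondOrderAverage_lieBracket [CompleteSpace E] {s : Finset ℕ} (hs : 0 ∉ s) {A₀ : E → E}
    {A B : ℕ → E → E} (hA₀ : DifferentiableAt ℝ A₀ x) (hA : ∀ n ∈ s, DifferentiableAt ℝ (A n) x)
    (hB : ∀ n ∈ s, DifferentiableAt ℝ (B n) x) :
    (-(1 / (4 * π))) • ∫ t in (0 : ℝ)..(2 * π), ∫ τ in (0 : ℝ)..t,
        lieBracket ℝ (A₀ + trigSum s A B t) (A₀ + trigSum s A B τ) x
      = ∑ n ∈ s, (n : ℝ)⁻¹ • lieBracket ℝ (B n) (A₀ - (2⁻¹ : ℝ) • A n) x := by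
  have hjet (t : ℝ) : oneJet x (A₀ + trigSum s A B t)
      = oneJet x A₀ + trigSum s (oneJet x ∘ A) (oneJet x ∘ B) t := by
    have hsum : DifferentiableAt ℝ (trigSum s A B t) x :=
      DifferentiableAt.sum fun n hn ↦ ((hA n hn).const_smul _).add ((hB n hn).const_smul _)
    rw [oneJet_add hA₀ hsum, oneJet_trigSum hA hB]
  simp_rw [lieBracket_eq_jetBracket, hjet]
  rw [integral_integral_alternating_const_add_trigSum (β := jetBracket E) jetBracket_self hs,
    smul_smul, show -(1 / (4 * π)) * -(4 * π) = 1 by field_simp, one_smul]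
  refine Finset.sum_congr rfl fun n hn ↦ ?_
  rw [oneJet_sub hA₀ ((hA n hn).const_smul _), oneJet_const_smul (hA n hn)]
  rfl

lemma lieBracket_smul_const_smul_const {f h : E → ℝ} (hf : DifferentiableAt ℝ f x)
    (hh : DifferentiableAt ℝ h x) (v w : E) :
    lieBracket ℝ (fun y ↦ f y • v) (fun y ↦ h y • w) x
      = (f x * fderiv ℝ h x v) • w - (h x * fderiv ℝ f x w) • v := by
  simp [lieBracket, fderiv_smul_const hf, fderiv_smul_const hh, mul_smul]

lemma lieBracket_prodMk {E₁ E₂ : Type*} [NormedAddCommGroup E₁] [NormedSpace ℝ E₁]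
    [NormedAddCommGroup E₂] [NormedSpace ℝ E₂] {x : E₁ × E₂} {p u : E₁ × E₂ → E₁}
    {q v : E₁ × E₂ → E₂} (hp : DifferentiableAt ℝ p x) (hq : DifferentiableAt ℝ q x)
    (hu : DifferentiableAt ℝ u x) (hv : DifferentiableAt ℝ v x) :
    lieBracket ℝ (fun y ↦ (p y, q y)) (fun y ↦ (u y, v y)) x
      = (fderiv ℝ u x (p x, q x) - fderiv ℝ p x (u x, v x),
          fderiv ℝ v x (p x, q x) - fderiv ℝ q x (u x, v x)) := by
  simp [lieBracket, hp.fderiv_prodMk hq, hu.fderiv_prodMk hv]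

end LieBracket

section VanDerPol

/-- The mean over `t` of the Van der Pol field `x ↦ ξ_t(x) V_t`. -/
noncomputable def vdpMean (x : ℝ × ℝ) : ℝ × ℝ :=
  ((1 - (x.1 ^ 2 + x.2 ^ 2) / 4) / 2) • x

/-- The coefficient of `cos (n t)` in the Van der Pol field `x ↦ ξ_t(x) V_t`, for `n ≠ 0`. -/
noncomputable def vdpCos : ℕ → ℝ × ℝ → ℝ × ℝ
  | 2 => fun x ↦ (x.1 * (x.2 ^ 2 - 1) / 2, x.2 * (1 - x.1 ^ 2) / 2)
  | 4 => fun x ↦ ((x.1 ^ 3 - 3 * x.1 * x.2 ^ 2) / 8, -(3 * x.1 ^ 2 * x.2 - x.2 ^ 3) / 8)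
  | _ => fun _ ↦ 0

/-- The coefficient of `sin (n t)` in the Van der Pol field `x ↦ ξ_t(x) V_t`. -/
noncomputable def vdpSin : ℕ → ℝ × ℝ → ℝ × ℝ
  | 2 => fun x ↦ (x.2 * (x.2 ^ 2 - x.1 ^ 2 - 2) / 4, x.1 * (x.1 ^ 2 - x.2 ^ 2 - 2) / 4)
  | 4 => fun x ↦ ((3 * x.1 ^ 2 * x.2 - x.2 ^ 3) / 8, (x.1 ^ 3 - 3 * x.1 * x.2 ^ 2) / 8)
  | _ => fun _ ↦ 0

lemma differentiable_vdpMean : Differentiable ℝ vdpMean := by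
  unfold vdpMean
  fun_prop

lemma differentiable_vdpCos (n : ℕ) : Differentiable ℝ (vdpCos n) := by
  unfold vdpCos
  split <;> fun_prop

lemma differentiable_vdpSin (n : ℕ) : Differentiable ℝ (vdpSin n) := by
  unfold vdpSin
  split <;> fun_prop

lemma differentiable_vdpXi (t : ℝ) : Differentiable ℝ (vdpXi t) := by
  unfold vdpXi
  fun_prop

lemma vdpXi_smul_vdpV_eq_trigSum (t : ℝ) :
    (fun x ↦ vdpXi t x • vdpV t) = vdpMean + trigSum {2, 4} vdpCos vdpSin t := by
  have hcos_four : cos (4 * t) = 2 * cos (2 * t) ^ 2 - 1 := by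
    rw [← cos_two_mul]
    ring_nf
  have hsin_four : sin (4 * t) = 2 * sin (2 * t) * cos (2 * t) := by
    rw [← sin_two_mul]
    ring_nf
  have hsin_sq := sin_sq t
  ext x
  · simp only [vdpXi, vdpV, vdpMean, trigSum, vdpCos, vdpSin, hcos_four, hsin_four, cos_two_mul,
      sin_two_mul, neg_mul, mul_neg, neg_sub, Prod.smul_mk, smul_eq_mul, Finset.mem_singleton,
      Nat.reduceEqDiff, not_false_eq_true, Finset.sum_insert, Finset.sum_singleton, Nat.cast_ofNat,
      Pi.add_apply, Pi.smul_apply, Prod.mk_add_mk, Prod.fst_add, Prod.smul_fst]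
    linear_combination (x.1 - cos t ^ 2 * x.1 ^ 3 - 2 * cos t * sin t * x.1 ^ 2 * x.2
      + 2 * cos t ^ 2 * x.1 * x.2 ^ 2 - (sin t ^ 2 + 1 - cos t ^ 2) * x.1 * x.2 ^ 2
      + sin t * cos t * x.2 ^ 3) * hsin_sq
  · simp only [vdpXi, vdpV, vdpMean, trigSum, vdpCos, vdpSin, hcos_four, hsin_four, cos_two_mul,
      sin_two_mul, neg_mul, mul_neg, neg_sub, Prod.smul_mk, smul_eq_mul, Finset.mem_singleton,
      Nat.reduceEqDiff, not_false_eq_true, Finset.sum_insert, Finset.sum_singleton, Nat.cast_ofNat,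
      Pi.add_apply, Pi.smul_apply, Prod.mk_add_mk, Prod.snd_add, Prod.smul_snd]
    linear_combination (2 * cos t ^ 2 * x.1 ^ 2 * x.2 + sin t * cos t * x.1 * x.2 ^ 2
      - cos t ^ 2 * x.2 ^ 3) * hsin_sq

lemma lieBracket_vdp_two (x : ℝ × ℝ) :
    lieBracket ℝ (vdpSin 2) (vdpMean - (2⁻¹ : ℝ) • vdpCos 2) x
      = (1 / 8 : ℝ) • (x.2 * (-2 + x.2 ^ 2 + 7 * x.1 ^ 2 - x.1 ^ 2 * x.2 ^ 2 - x.1 ^ 4),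
          x.1 * (2 + x.2 ^ 2 - 5 * x.1 ^ 2 + x.1 ^ 2 * x.2 ^ 2 + x.1 ^ 4)) := by
  have hW : vdpMean - (2⁻¹ : ℝ) • vdpCos 2 = fun x ↦
      (x.1 * (6 - x.1 ^ 2 - 3 * x.2 ^ 2) / 8, x.2 * (2 + x.1 ^ 2 - x.2 ^ 2) / 8) := by
    ext x <;>
      simp only [vdpCos, vdpMean, Pi.sub_apply, Pi.smul_apply, Prod.smul_mk, smul_eq_mul,
        Prod.fst_sub, Prod.snd_sub, Prod.smul_fst, Prod.smul_snd] <;>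
      ring
  rw [hW, vdpSin, lieBracket_prodMk (by fun_prop) (by fun_prop) (by fun_prop) (by fun_prop)]
  simp (disch := fun_prop) only [div_eq_mul_inv, fderiv_fun_mul, fderiv_fun_add, fderiv_fun_sub,
    fderiv_fun_pow, fderiv_fst, fderiv_snd, fderiv_fun_const]
  ext <;>
    simp only [Pi.zero_apply, smul_zero, Nat.add_one_sub_one, pow_one, nsmul_eq_mul, Nat.cast_ofNat,
      zero_sub, add_zero, smul_add, zero_add, add_apply, smul_apply, sub_apply, neg_apply,
      ContinuousLinearMap.coe_fst', ContinuousLinearMap.coe_snd', smul_eq_mul, sub_zero, one_mul,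
      Prod.smul_mk] <;>
    ring

lemma lieBracket_vdp_four (x : ℝ × ℝ) :
    lieBracket ℝ (vdpSin 4) (vdpMean - (2⁻¹ : ℝ) • vdpCos 4) x
      = (1 / 64 : ℝ) •
        (x.2 * (8 * x.2 ^ 2 - 5 * x.2 ^ 4 - 24 * x.1 ^ 2 + 6 * x.1 ^ 2 * x.2 ^ 2 - 5 * x.1 ^ 4),
          x.1 *
            (24 * x.2 ^ 2 + 5 * x.2 ^ 4 - 8 * x.1 ^ 2 - 6 * x.1 ^ 2 * x.2 ^ 2 + 5 * x.1 ^ 4)) := by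
  have hW : vdpMean - (2⁻¹ : ℝ) • vdpCos 4 = fun x ↦
      (x.1 * (8 - 3 * x.1 ^ 2 + x.2 ^ 2) / 16, x.2 * (8 + x.1 ^ 2 - 3 * x.2 ^ 2) / 16) := by
    ext x <;>
      simp only [vdpCos, vdpMean, Pi.sub_apply, Pi.smul_apply, Prod.smul_mk, smul_eq_mul,
        Prod.fst_sub, Prod.snd_sub, Prod.smul_fst, Prod.smul_snd] <;>
      ring
  rw [hW, vdpSin, lieBracket_prodMk (by fun_prop) (by fun_prop) (by fun_prop) (by fun_prop)]
  simp (disch := fun_prop) only [div_eq_mul_inv, fderiv_fun_mul, fderiv_fun_add, fderiv_fun_sub,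
    fderiv_fun_pow, fderiv_fst, fderiv_snd, fderiv_fun_const]
  ext <;>
    simp only [Pi.zero_apply, smul_zero, Nat.add_one_sub_one, pow_one, nsmul_eq_mul, Nat.cast_ofNat,
      zero_sub, add_zero, smul_add, smul_neg, zero_add, add_apply, smul_apply, sub_apply, neg_apply,
      ContinuousLinearMap.coe_fst', ContinuousLinearMap.coe_snd', smul_eq_mul, one_mul,
      Prod.smul_mk] <;>
    ring

end VanDerPol

/-- The second-order averaged vector field of the Van der Pol oscillator:
`−(1/(4π)) ∫₀^{2π} ∫₀ᵗ (ξ_t(X)(∇ξ_τ(X)·V_t)V_τ − ξ_τ(X)(∇ξ_t(X)·V_τ)V_t) dτ dt`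
equals the explicit quintic polynomial vector field of the paper. Here
`∇ξ_t(X)·v` is realized as the Fréchet derivative of `x ↦ ξ_t(x)` at `X`
applied to `v`. -/
theorem vdp_second_order_average (X : ℝ × ℝ) :
    (-(1 / (4 * π))) • (∫ t in (0:ℝ)..(2 * π), ∫ τ in (0:ℝ)..t,
        ((vdpXi t X * fderiv ℝ (vdpXi τ) X (vdpV t)) • vdpV τ
          - (vdpXi τ X * fderiv ℝ (vdpXi t) X (vdpV τ)) • vdpV t))
      = (1 / 256 : ℝ) •
          ((-X.2 * (32 - 24 * X.2 ^ 2 + 5 * X.2 ^ 4 - 88 * X.1 ^ 2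
              + 21 * X.1 ^ 4 + 10 * X.1 ^ 2 * X.2 ^ 2),
            X.1 * (21 * X.1 ^ 4 + 32 - 88 * X.1 ^ 2 + 40 * X.2 ^ 2
              + 10 * X.1 ^ 2 * X.2 ^ 2 + 5 * X.2 ^ 4)) : ℝ × ℝ) := by
  have hbracket (t τ : ℝ) :
      (vdpXi t X * fderiv ℝ (vdpXi τ) X (vdpV t)) • vdpV τ
          - (vdpXi τ X * fderiv ℝ (vdpXi t) X (vdpV τ)) • vdpV t
        = lieBracket ℝ (vdpMean + trigSum {2, 4} vdpCos vdpSin t)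
            (vdpMean + trigSum {2, 4} vdpCos vdpSin τ) X := by
    rw [← vdpXi_smul_vdpV_eq_trigSum, ← vdpXi_smul_vdpV_eq_trigSum,
      lieBracket_smul_const_smul_const (differentiable_vdpXi t X) (differentiable_vdpXi τ X)]
  simp_rw [hbracket]
  rw [secondOrderAverage_lieBracket (by simp) (differentiable_vdpMean X)
      (fun n _ ↦ differentiable_vdpCos n X) (fun n _ ↦ differentiable_vdpSin n X),
    Finset.sum_pair (by simp), lieBracket_vdp_two, lieBracket_vdp_four]
  ext <;>
    simp only [Nat.cast_ofNat, one_div, Prod.smul_mk, smul_eq_mul, Prod.mk_add_mk, neg_mul,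
      mul_neg] <;>
    ring
end
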